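/- For any two states ω¹, ω² of a finite-dimensional tripartite system ABC with ε = ½‖ω¹−ω²‖₁ < 1, the conditional mutual information satisfies |I(A:C|B)_{ω¹} − I(A:C|B)_{ω²}| ≤ 2ε log(dim H_A) + 4(1+ε)·h₂(ε/(1+ε)). -/

import Mathlib

open Matrix
open scoped ComplexOrder

noncomputable section

/-- The von Neumann entropy, extended to the cone of positive trace-class operators by
`H(ρ) = Tr η(ρ) − η(Tr ρ)` with `η(x) = −x log x` (computed spectrally). -/
def vnEnt {n : Type*} [Fintype n] [DecidableEq n] (ρ : Matrix n n ℂ) : ℝ :=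
  if h : ρ.IsHermitian then
    (∑ i, Real.negMulLog (h.eigenvalues i)) - Real.negMulLog (∑ i, h.eigenvalues i)
  else 0

/-- A state (density operator): positive semidefinite with unit trace. -/
def IsState {n : Type*} [Fintype n] (ρ : Matrix n n ℂ) : Prop :=
  ρ.PosSemidef ∧ ρ.trace = 1

section Tripartite

variable {a b c : Type*} [Fintype a] [DecidableEq a] [Fintype b] [DecidableEq b]
  [Fintype c] [DecidableEq c]

/-- Marginal `ω_A` of a tripartite operator. -/
def mA (ω : Matrix (a × b × c) (a × b × c) ℂ) : Matrix a a ℂ :=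
  Matrix.of fun i j => ∑ k : b × c, ω (i, k) (j, k)

/-- Marginal `ω_B`. -/
def mB (ω : Matrix (a × b × c) (a × b × c) ℂ) : Matrix b b ℂ :=
  Matrix.of fun i j => ∑ k : a, ∑ l : c, ω (k, i, l) (k, j, l)

/-- Marginal `ω_C`. -/
def mC (ω : Matrix (a × b × c) (a × b × c) ℂ) : Matrix c c ℂ :=
  Matrix.of fun i j => ∑ k : a, ∑ l : b, ω (k, l, i) (k, l, j)

/-- Marginal `ω_AB`. -/
def mAB (ω : Matrix (a × b × c) (a × b × c) ℂ) : Matrix (a × b) (a × b) ℂ :=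
  Matrix.of fun p q => ∑ k : c, ω (p.1, p.2, k) (q.1, q.2, k)

/-- Marginal `ω_BC`. -/
def mBC (ω : Matrix (a × b × c) (a × b × c) ℂ) : Matrix (b × c) (b × c) ℂ :=
  Matrix.of fun p q => ∑ k : a, ω (k, p) (k, q)

/-- Marginal `ω_AC`. -/
def mAC (ω : Matrix (a × b × c) (a × b × c) ℂ) : Matrix (a × c) (a × c) ℂ :=
  Matrix.of fun p q => ∑ k : b, ω (p.1, k, p.2) (q.1, k, q.2)

/-- Conditional mutual information `I(A:C|B)_ω = H(ω_AB)+H(ω_BC)−H(ω_ABC)−H(ω_B)`. -/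
def cmi (ω : Matrix (a × b × c) (a × b × c) ℂ) : ℝ :=
  vnEnt (mAB ω) + vnEnt (mBC ω) - vnEnt ω - vnEnt (mB ω)

end Tripartite

/-- The trace norm of a matrix: the sum of its singular values. -/
def traceNorm {n : Type*} [Fintype n] [DecidableEq n] (M : Matrix n n ℂ) : ℝ :=
  ∑ i, Real.sqrt ((Matrix.posSemidef_conjTranspose_mul_self M).1.eigenvalues i)

set_option linter.unusedSectionVars false

section SpectralEntropy

open Real

variable {n m : Type*} [Fintype n] [DecidableEq n] [Fintype m] [DecidableEq m]

/-- `U` is a unitary diagonalizing `A`, with real eigenvalues `d`. -/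
structure IsDiagonalizedBy (A U : Matrix n n ℂ) (d : n → ℝ) : Prop where
  conjTranspose_mul_self : Uᴴ * U = 1
  eq_conj : A = U * diagonal (fun i => (d i : ℂ)) * Uᴴ

/-- The unnormalized entropy `Tr η(A)`, the sum of `η` over the roots of the
characteristic polynomial. -/
def spectralEntropy (A : Matrix n n ℂ) : ℝ :=
  (A.charpoly.roots.map fun z => negMulLog z.re).sum

theorem Matrix.IsHermitian.isDiagonalizedBy {A : Matrix n n ℂ} (h : A.IsHermitian) :
    IsDiagonalizedBy A h.eigenvectorUnitary h.eigenvalues where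
  conjTranspose_mul_self := by
    rw [← star_eq_conjTranspose]; exact Unitary.coe_star_mul_self _
  eq_conj := by
    conv_lhs => rw [h.spectral_theorem, Unitary.conjStarAlgAut_apply]
    rfl

theorem Matrix.IsHermitian.exists_isDiagonalizedBy {A : Matrix n n ℂ} (h : A.IsHermitian) :
    ∃ U d, IsDiagonalizedBy A U d :=
  ⟨_, _, h.isDiagonalizedBy⟩

theorem Matrix.IsHermitian.sum_eigenvalues_eq_sum_roots {A : Matrix n n ℂ} (h : A.IsHermitian)
    (f : ℝ → ℝ) :
    ∑ i, f (h.eigenvalues i) = (A.charpoly.roots.map fun z => f z.re).sum := by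
  rw [h.roots_charpoly_eq_eigenvalues, Multiset.map_map]
  rfl

namespace IsDiagonalizedBy

variable {A U : Matrix n n ℂ} {d : n → ℝ}

theorem mul_conjTranspose_self (h : IsDiagonalizedBy A U d) : U * Uᴴ = 1 :=
  mul_eq_one_comm.mp h.conjTranspose_mul_self

theorem sum_roots (h : IsDiagonalizedBy A U d) (f : ℝ → ℝ) :
    (A.charpoly.roots.map fun z => f z.re).sum = ∑ i, f (d i) := by
  rw [h.eq_conj, mul_assoc, charpoly_mul_comm, mul_assoc, h.conjTranspose_mul_self, mul_one,
    charpoly_diagonal, Polynomial.roots_prod]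
  · simp [Finset.sum_eq_multiset_sum, -Finset.sum_map_val]
  · simp [Finset.prod_ne_zero_iff, Polynomial.X_sub_C_ne_zero]

theorem spectralEntropy_eq (h : IsDiagonalizedBy A U d) :
    spectralEntropy A = ∑ i, negMulLog (d i) :=
  h.sum_roots _

theorem isHermitian (h : IsDiagonalizedBy A U d) : A.IsHermitian := by
  rw [h.eq_conj]
  apply isHermitian_mul_mul_conjTranspose
  rw [isHermitian_diagonal_iff]
  intro i
  exact Complex.conj_ofReal _

theorem trace_eq (h : IsDiagonalizedBy A U d) : A.trace = ∑ i, (d i : ℂ) := by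
  rw [h.eq_conj, trace_mul_cycle, h.conjTranspose_mul_self, one_mul, trace_diagonal]

theorem nonneg (h : IsDiagonalizedBy A U d) (hA : A.PosSemidef) (i : n) : 0 ≤ d i := by
  have h1 : (Uᴴ * A * U).PosSemidef := hA.conjTranspose_mul_mul_same U
  have h2 : Uᴴ * A * U = diagonal (fun i => (d i : ℂ)) := by
    rw [h.eq_conj]
    simp only [mul_assoc, h.conjTranspose_mul_self, mul_one]
    rw [← mul_assoc, h.conjTranspose_mul_self, one_mul]
  rw [h2, posSemidef_diagonal_iff] at h1
  exact_mod_cast h1 i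

theorem posSemidef (h : IsDiagonalizedBy A U d) (hd : ∀ i, 0 ≤ d i) : A.PosSemidef := by
  rw [h.eq_conj]
  apply PosSemidef.mul_mul_conjTranspose_same
  rw [posSemidef_diagonal_iff]
  exact fun i => by exact_mod_cast hd i

theorem add_smul_one (h : IsDiagonalizedBy A U d) (r : ℝ) :
    IsDiagonalizedBy (A + (r : ℂ) • 1) U (fun i => d i + r) where
  conjTranspose_mul_self := h.conjTranspose_mul_self
  eq_conj := by
    have : diagonal (fun i => ((d i + r : ℝ) : ℂ))
        = diagonal (fun i => (d i : ℂ)) + (r : ℂ) • (1 : Matrix n n ℂ) := by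
      ext i j
      by_cases hij : i = j <;> simp [hij]
    rw [this, mul_add, add_mul, ← h.eq_conj]
    simp [h.mul_conjTranspose_self]

theorem smul (h : IsDiagonalizedBy A U d) (r : ℝ) :
    IsDiagonalizedBy ((r : ℂ) • A) U (fun i => r * d i) where
  conjTranspose_mul_self := h.conjTranspose_mul_self
  eq_conj := by
    have : diagonal (fun i => ((r * d i : ℝ) : ℂ)) = (r : ℂ) • diagonal (fun i => (d i : ℂ)) := by
      ext i j
      by_cases hij : i = j <;> simp [hij]
    rw [this]
    simp [← h.eq_conj]

/-- Diagonal entries in an arbitrary basis are weighted averages of the eigenvalues. -/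
theorem conj_apply_self (h : IsDiagonalizedBy A U d) (V : Matrix n m ℂ) (j : m) :
    (Vᴴ * A * V) j j = ((∑ i, ‖(Vᴴ * U) j i‖ ^ 2 * d i : ℝ) : ℂ) := by
  have : Vᴴ * A * V = (Vᴴ * U) * diagonal (fun i => (d i : ℂ)) * (Vᴴ * U)ᴴ := by
    rw [h.eq_conj]
    simp only [Matrix.mul_assoc, conjTranspose_mul, conjTranspose_conjTranspose]
  rw [this, mul_apply]
  push_cast
  refine Finset.sum_congr rfl fun i _ => ?_
  rw [mul_diagonal, conjTranspose_apply, ← Complex.mul_conj', Complex.star_def]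
  ring

end IsDiagonalizedBy

theorem sum_norm_sq_row {W : Matrix n m ℂ} (h : W * Wᴴ = 1) (i : n) :
    ∑ j, ‖W i j‖ ^ 2 = 1 := by
  have := congrFun (congrFun h i) i
  rw [mul_apply, one_apply_eq] at this
  have h2 : ((∑ j, ‖W i j‖ ^ 2 : ℝ) : ℂ) = 1 := by
    push_cast
    rw [← this]
    refine Finset.sum_congr rfl fun j _ => ?_
    rw [← Complex.mul_conj', conjTranspose_apply, Complex.star_def]
  exact_mod_cast h2

theorem sum_norm_sq_col {W : Matrix n m ℂ} (h : Wᴴ * W = 1) (j : m) :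
    ∑ i, ‖W i j‖ ^ 2 = 1 := by
  have := sum_norm_sq_row (W := Wᴴ) (by simpa using h) j
  simpa using this

theorem vnEnt_eq {A : Matrix n n ℂ} (h : A.IsHermitian) :
    vnEnt A = spectralEntropy A - negMulLog A.trace.re := by
  rw [vnEnt, dif_pos h, h.isDiagonalizedBy.spectralEntropy_eq, h.isDiagonalizedBy.trace_eq]
  simp

/-- **Peierls inequality** for the entropy. -/
theorem spectralEntropy_le_sum_diag {A : Matrix n n ℂ} (hA : A.PosSemidef) {V : Matrix n n ℂ}
    (hV : Vᴴ * V = 1) :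
    spectralEntropy A ≤ ∑ j, negMulLog ((Vᴴ * A * V) j j).re := by
  obtain ⟨U, d, h⟩ := hA.1.exists_isDiagonalizedBy
  have hd := h.nonneg hA
  have hV' : V * Vᴴ = 1 := mul_eq_one_comm.mp hV
  have hW : (Vᴴ * U) * (Vᴴ * U)ᴴ = 1 := by
    rw [conjTranspose_mul, conjTranspose_conjTranspose, mul_assoc, ← mul_assoc U,
      h.mul_conjTranspose_self, one_mul, hV]
  have hW' := mul_eq_one_comm.mp hW
  have key : ∀ j, ∑ i, ‖(Vᴴ * U) j i‖ ^ 2 * negMulLog (d i)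
      ≤ negMulLog ((Vᴴ * A * V) j j).re := by
    intro j
    rw [h.conj_apply_self, Complex.ofReal_re]
    exact concaveOn_negMulLog.le_map_sum (t := Finset.univ) (fun i _ => by positivity)
      (sum_norm_sq_row hW j) (fun i _ => hd i)
  calc spectralEntropy A = ∑ i, (∑ j, ‖(Vᴴ * U) j i‖ ^ 2) * negMulLog (d i) := by
        simp_rw [sum_norm_sq_col hW', one_mul]
        exact h.spectralEntropy_eq
    _ = ∑ j, ∑ i, ‖(Vᴴ * U) j i‖ ^ 2 * negMulLog (d i) := by
        simp_rw [Finset.sum_mul]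
        exact Finset.sum_comm
    _ ≤ _ := Finset.sum_le_sum fun j _ => key j

theorem spectralEntropy_mul_comm (M : Matrix n m ℂ) (N : Matrix m n ℂ) :
    spectralEntropy (M * N) = spectralEntropy (N * M) := by
  have h := congrArg (fun p : Polynomial ℂ => (p.roots.map fun z => negMulLog z.re).sum)
    (charpoly_mul_comm' M N)
  have h0 : ∀ k : ℕ, (Polynomial.X ^ k : Polynomial ℂ) ≠ 0 := fun k =>
    (Polynomial.monic_X_pow k).ne_zero
  beta_reduce at h
  rw [Polynomial.roots_mul (mul_ne_zero (h0 _) (charpoly_monic _).ne_zero),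
    Polynomial.roots_mul (mul_ne_zero (h0 _) (charpoly_monic _).ne_zero)] at h
  simpa [spectralEntropy, Multiset.map_nsmul, Multiset.sum_nsmul] using h

/-- The entropy of a mixture of pure states is at most the entropy of its weights. -/
theorem spectralEntropy_mul_conjTranspose_le (M : Matrix n m ℂ) :
    spectralEntropy (M * Mᴴ) ≤ ∑ j, negMulLog (∑ i, ‖M i j‖ ^ 2) := by
  rw [spectralEntropy_mul_comm]
  refine (spectralEntropy_le_sum_diag (posSemidef_conjTranspose_mul_self M)
    (V := 1) (by simp)).trans_eq (Finset.sum_congr rfl fun j _ => ?_)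
  congr 1
  rw [conjTranspose_one, Matrix.one_mul, Matrix.mul_one, mul_apply, Complex.re_sum]
  refine Finset.sum_congr rfl fun i _ => ?_
  rw [conjTranspose_apply, Complex.star_def, Complex.conj_mul']
  norm_cast

theorem IsDiagonalizedBy.exists_factor {A U : Matrix n n ℂ} {d : n → ℝ}
    (h : IsDiagonalizedBy A U d) (hd : ∀ i, 0 ≤ d i) :
    ∃ M : Matrix n n ℂ, A = M * Mᴴ ∧ ∀ i j, ‖M i j‖ ^ 2 = ‖U i j‖ ^ 2 * d j := by
  refine ⟨U * diagonal (fun i => ((√(d i) : ℝ) : ℂ)), ?_, fun i j => ?_⟩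
  · conv_lhs => rw [h.eq_conj]
    rw [conjTranspose_mul, diagonal_conjTranspose, mul_assoc, mul_assoc, ← mul_assoc (diagonal _),
      diagonal_mul_diagonal]
    congr! 4 with i
    simp only [Pi.star_apply, Complex.star_def, Complex.conj_ofReal]
    rw [← Complex.ofReal_mul, Real.mul_self_sqrt (hd i)]
  · rw [mul_diagonal, norm_mul, mul_pow, Complex.norm_real, Real.norm_eq_abs, sq_abs,
      Real.sq_sqrt (hd j)]

theorem spectralEntropy_add_le {A B : Matrix n n ℂ} (hA : A.PosSemidef) (hB : B.PosSemidef) :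
    spectralEntropy (A + B) ≤ spectralEntropy A + spectralEntropy B := by
  have hA' := hA.1.isDiagonalizedBy
  have hB' := hB.1.isDiagonalizedBy
  obtain ⟨M, hM, hM2⟩ := hA'.exists_factor (hA'.nonneg hA)
  obtain ⟨N, hN, hN2⟩ := hB'.exists_factor (hB'.nonneg hB)
  have : A + B = fromCols M N * (fromCols M N)ᴴ := by
    rw [conjTranspose_fromCols_eq_fromRows_conjTranspose, fromCols_mul_fromRows, ← hM, ← hN]
  rw [this, hA'.spectralEntropy_eq, hB'.spectralEntropy_eq]
  refine (spectralEntropy_mul_conjTranspose_le _).trans_eq ?_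
  simp only [Fintype.sum_sum_type, fromCols_apply_inl, fromCols_apply_inr, hM2, hN2]
  simp_rw [← Finset.sum_mul, sum_norm_sq_col hA'.conjTranspose_mul_self,
    sum_norm_sq_col hB'.conjTranspose_mul_self, one_mul]

theorem spectralEntropy_smul {A : Matrix n n ℂ} (hA : A.IsHermitian) (r : ℝ) :
    spectralEntropy ((r : ℂ) • A) = r * spectralEntropy A + negMulLog r * A.trace.re := by
  have h := hA.isDiagonalizedBy
  rw [(h.smul r).spectralEntropy_eq, h.spectralEntropy_eq, h.trace_eq]
  simp only [negMulLog_mul, Finset.sum_add_distrib, Finset.mul_sum, Complex.re_sum,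
    Complex.ofReal_re]
  rw [add_comm]
  congr 1
  exact Finset.sum_congr rfl fun _ _ => mul_comm _ _

theorem spectralEntropy_concave {A B : Matrix n n ℂ} (hA : A.PosSemidef) (hB : B.PosSemidef)
    {p q : ℝ} (hp : 0 ≤ p) (hq : 0 ≤ q) (hpq : p + q = 1) :
    p * spectralEntropy A + q * spectralEntropy B
      ≤ spectralEntropy ((p : ℂ) • A + (q : ℂ) • B) := by
  have hC : ((p : ℂ) • A + (q : ℂ) • B).PosSemidef :=
    (hA.smul (by exact_mod_cast hp)).add (hB.smul (by exact_mod_cast hq))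
  obtain ⟨U, d, h⟩ := hC.1.exists_isDiagonalizedBy
  have hU := h.conjTranspose_mul_self
  have hdiag : ∀ j, d j = p * ((Uᴴ * A * U) j j).re + q * ((Uᴴ * B * U) j j).re := by
    intro j
    have h1 : Uᴴ * ((p : ℂ) • A + (q : ℂ) • B) * U
        = (p : ℂ) • (Uᴴ * A * U) + (q : ℂ) • (Uᴴ * B * U) := by
      simp [mul_add, add_mul]
    have h2 := h.conj_apply_self U j
    rw [h1, hU] at h2
    have h3 := congrArg Complex.re h2
    rw [Complex.ofReal_re] at h3
    simpa [one_apply, apply_ite, ite_pow] using h3.symm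
  have hnn : ∀ {X : Matrix n n ℂ}, X.PosSemidef → ∀ j, 0 ≤ ((Uᴴ * X * U) j j).re := fun hX j =>
    (Complex.le_def.mp ((hX.conjTranspose_mul_mul_same U).diag_nonneg (i := j))).1
  rw [h.spectralEntropy_eq]
  calc _ ≤ p * ∑ j, negMulLog ((Uᴴ * A * U) j j).re + q * ∑ j, negMulLog ((Uᴴ * B * U) j j).re :=
        add_le_add (mul_le_mul_of_nonneg_left (spectralEntropy_le_sum_diag hA hU) hp)
          (mul_le_mul_of_nonneg_left (spectralEntropy_le_sum_diag hB hU) hq)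
    _ = ∑ j, (p * negMulLog ((Uᴴ * A * U) j j).re + q * negMulLog ((Uᴴ * B * U) j j).re) := by
        rw [Finset.sum_add_distrib, Finset.mul_sum, Finset.mul_sum]
    _ ≤ _ := Finset.sum_le_sum fun j _ => by
        rw [hdiag j]
        exact concaveOn_negMulLog.2 (hnn hA j) (hnn hB j) hp hq hpq

theorem spectralEntropy_convexComb_le {A B : Matrix n n ℂ} (hA : A.PosSemidef)
    (hB : B.PosSemidef) {p q : ℝ} (hp : 0 ≤ p) (hq : 0 ≤ q) (hpq : p + q = 1)
    (hA1 : A.trace = 1) (hB1 : B.trace = 1) :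
    spectralEntropy ((p : ℂ) • A + (q : ℂ) • B)
      ≤ p * spectralEntropy A + q * spectralEntropy B + binEntropy q := by
  refine (spectralEntropy_add_le (hA.smul (by exact_mod_cast hp))
    (hB.smul (by exact_mod_cast hq))).trans_eq ?_
  rw [spectralEntropy_smul hA.1, spectralEntropy_smul hB.1, hA1, hB1,
    binEntropy_eq_negMulLog_add_negMulLog_one_sub, ← hpq, add_sub_cancel_right]
  simp
  ring

theorem sum_negMulLog_le {ι : Type*} [Fintype ι] {x : ι → ℝ} (hx : ∀ i, 0 ≤ x i) :
    ∑ i, negMulLog (x i)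
      ≤ negMulLog (∑ i, x i) + (∑ i, x i) * Real.log (Fintype.card ι) := by
  rcases isEmpty_or_nonempty ι with _ | _
  · simp
  have hk : (0 : ℝ) < Fintype.card ι := by exact_mod_cast Fintype.card_pos
  have h := concaveOn_negMulLog.le_map_sum (t := Finset.univ)
    (w := fun _ : ι => (Fintype.card ι : ℝ)⁻¹) (p := x) (fun i _ => by positivity) (by simp [hk.ne']) (fun i _ => hx i)
  simp only [smul_eq_mul, ← Finset.mul_sum] at h
  rw [negMulLog_mul, inv_mul_le_iff₀ hk] at h
  refine h.trans_eq ?_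
  rw [negMulLog, Real.log_inv]
  field_simp
  ring

end SpectralEntropy

section Monotonicity

open Real Filter Topology

variable {n m : Type*} [Fintype n] [DecidableEq n] [Fintype m] [DecidableEq m]

/-- The quadratic functional in `X` whose supremum is
`⟨ρ^{1/2}, (L_σ R_ρ⁻¹ + t)⁻¹ ρ^{1/2}⟩`. -/
def modularQuadratic (ρ σ : Matrix n n ℂ) (t : ℝ) (X : Matrix n n ℂ) : ℝ :=
  2 * (ρ * X).trace.re - (σ * (X * Xᴴ)).trace.re - t * (ρ * (Xᴴ * X)).trace.re

namespace IsDiagonalizedBy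

variable {ρ σ U V : Matrix n n ℂ} {p q : n → ℝ}

theorem trace_mul_re (hρ : IsDiagonalizedBy ρ U p) (X : Matrix n n ℂ) :
    (ρ * X).trace.re = ∑ i, p i * ((Uᴴ * X * U) i i).re := by
  have h : (ρ * X).trace = (diagonal (fun i => (p i : ℂ)) * (Uᴴ * X * U)).trace := by
    rw [hρ.eq_conj, Matrix.mul_assoc, Matrix.mul_assoc, trace_mul_comm]
    simp only [Matrix.mul_assoc]
  rw [h, trace, Complex.re_sum]
  refine Finset.sum_congr rfl fun i _ => ?_
  rw [diag_apply, diagonal_mul, Complex.re_ofReal_mul]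

theorem modularQuadratic_eq (hρ : IsDiagonalizedBy ρ U p) (hσ : IsDiagonalizedBy σ V q) (t : ℝ)
    (X : Matrix n n ℂ) :
    modularQuadratic ρ σ t X = ∑ i, ∑ j,
      (2 * p i * ((Uᴴ * V) i j * (Vᴴ * X * U) j i).re
        - (q j + t * p i) * ‖(Vᴴ * X * U) j i‖ ^ 2) := by
  have hU := hρ.mul_conjTranspose_self
  have hV := hσ.mul_conjTranspose_self
  set Y := Vᴴ * X * U with hY
  have e1 : Uᴴ * X * U = Uᴴ * V * Y := by
    rw [hY]
    simp only [Matrix.mul_assoc]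
    rw [← Matrix.mul_assoc V, hV, Matrix.one_mul]
  have e2 : Vᴴ * (X * Xᴴ) * V = Y * Yᴴ := by
    rw [hY]
    simp only [Matrix.mul_assoc, conjTranspose_mul, conjTranspose_conjTranspose]
    rw [← Matrix.mul_assoc U, hU, Matrix.one_mul]
  have e3 : Uᴴ * (Xᴴ * X) * U = Yᴴ * Y := by
    rw [hY]
    simp only [Matrix.mul_assoc, conjTranspose_mul, conjTranspose_conjTranspose]
    rw [← Matrix.mul_assoc V, hV, Matrix.one_mul]
  have e2' : ∀ j, ((Y * Yᴴ) j j).re = ∑ i, ‖Y j i‖ ^ 2 := fun j => by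
    rw [mul_apply, Complex.re_sum]
    refine Finset.sum_congr rfl fun i _ => ?_
    rw [conjTranspose_apply, Complex.star_def, Complex.mul_conj']
    norm_cast
  have e3' : ∀ i, ((Yᴴ * Y) i i).re = ∑ j, ‖Y j i‖ ^ 2 := fun i => by
    rw [mul_apply, Complex.re_sum]
    refine Finset.sum_congr rfl fun j _ => ?_
    rw [conjTranspose_apply, Complex.star_def, Complex.conj_mul']
    norm_cast
  rw [modularQuadratic, hρ.trace_mul_re, hσ.trace_mul_re, hρ.trace_mul_re, e1, e2, e3]
  simp only [e2', e3', mul_apply (M := Uᴴ * V), Complex.re_sum, Finset.mul_sum]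
  rw [Finset.sum_comm (f := fun j i => q j * ‖Y j i‖ ^ 2)]
  simp only [← Finset.sum_sub_distrib]
  refine Finset.sum_congr rfl fun i _ => Finset.sum_congr rfl fun j _ => ?_
  ring

theorem modularQuadratic_le (hρ : IsDiagonalizedBy ρ U p) (hσ : IsDiagonalizedBy σ V q)
    (hp : ∀ i, 0 < p i) (hq : ∀ i, 0 < q i) {t : ℝ} (ht : 0 ≤ t) (X : Matrix n n ℂ) :
    modularQuadratic ρ σ t X
      ≤ ∑ i, ∑ j, ‖(Uᴴ * V) i j‖ ^ 2 * (p i ^ 2 / (q j + t * p i)) := by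
  rw [hρ.modularQuadratic_eq hσ]
  refine Finset.sum_le_sum fun i _ => Finset.sum_le_sum fun j _ => ?_
  have hpos : 0 < q j + t * p i := add_pos_of_pos_of_nonneg (hq j) (mul_nonneg ht (hp i).le)
  set w := (Uᴴ * V) i j
  set y := (Vᴴ * X * U) j i
  have h1 : (w * y).re ≤ ‖w‖ * ‖y‖ := (Complex.re_le_norm _).trans_eq (norm_mul _ _)
  have h2 : 2 * p i * (w * y).re ≤ 2 * p i * (‖w‖ * ‖y‖) :=
    mul_le_mul_of_nonneg_left h1 (by linarith [hp i])
  rw [← mul_div_assoc, le_div_iff₀ hpos]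
  nlinarith [sq_nonneg (‖w‖ * p i - (q j + t * p i) * ‖y‖)]

theorem exists_modularQuadratic_eq (hρ : IsDiagonalizedBy ρ U p) (hσ : IsDiagonalizedBy σ V q)
    (hp : ∀ i, 0 < p i) (hq : ∀ i, 0 < q i) {t : ℝ} (ht : 0 ≤ t) :
    ∃ X, modularQuadratic ρ σ t X
      = ∑ i, ∑ j, ‖(Uᴴ * V) i j‖ ^ 2 * (p i ^ 2 / (q j + t * p i)) := by
  let Y : Matrix n n ℂ := of fun j i => ((p i / (q j + t * p i) : ℝ) : ℂ) * star ((Uᴴ * V) i j)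
  refine ⟨V * Y * Uᴴ, ?_⟩
  have hY : Vᴴ * (V * Y * Uᴴ) * U = Y := by
    simp only [Matrix.mul_assoc, hρ.conjTranspose_mul_self, Matrix.mul_one]
    rw [← Matrix.mul_assoc, hσ.conjTranspose_mul_self, Matrix.one_mul]
  rw [hρ.modularQuadratic_eq hσ, hY]
  refine Finset.sum_congr rfl fun i _ => Finset.sum_congr rfl fun j _ => ?_
  have hpos : 0 < q j + t * p i := add_pos_of_pos_of_nonneg (hq j) (mul_nonneg ht (hp i).le)
  simp only [Y, of_apply]
  set w := (Uᴴ * V) i j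
  have h1 : w * (((p i / (q j + t * p i) : ℝ) : ℂ) * star w)
      = ((p i / (q j + t * p i) * ‖w‖ ^ 2 : ℝ) : ℂ) := by
    rw [mul_left_comm, Complex.star_def, Complex.mul_conj']
    push_cast
    rfl
  rw [h1, Complex.ofReal_re, norm_mul, norm_star, Complex.norm_real, mul_pow, Real.norm_eq_abs,
    sq_abs]
  field_simp
  ring

end IsDiagonalizedBy

theorem hasDerivAt_sum_mul_log {ι : Type*} [Fintype ι] {w p q : ι → ℝ} (hp : ∀ i, 0 < p i)
    (hq : ∀ i, 0 < q i) {t : ℝ} (ht : 0 ≤ t) :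
    HasDerivAt (fun t => ∑ i, w i * (p i * log (q i + t * p i)))
      (∑ i, w i * (p i ^ 2 / (q i + t * p i))) t := by
  refine HasDerivAt.fun_sum fun i _ => ?_
  have hpos : 0 < q i + t * p i := add_pos_of_pos_of_nonneg (hq i) (mul_nonneg ht (hp i).le)
  have h1 : HasDerivAt (fun t => q i + t * p i) (p i) t := by
    simpa using ((hasDerivAt_id t).mul_const (p i)).const_add (q i)
  refine (((h1.log hpos.ne').const_mul (p i)).const_mul (w i)).congr_deriv ?_
  rw [← mul_div_assoc (p i), sq]

theorem tendsto_sum_mul_log {ι : Type*} [Fintype ι] {w p q : ι → ℝ} (hp : ∀ i, 0 < p i)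
    (hq : ∀ i, 0 < q i) :
    Tendsto (fun t => ∑ i, w i * (p i * log (q i + t * p i)) - (∑ i, w i * p i) * log t) atTop
      (𝓝 (∑ i, w i * (p i * log (p i)))) := by
  have h : Tendsto (fun t : ℝ => ∑ i, w i * (p i * log (q i * t⁻¹ + p i))) atTop
      (𝓝 (∑ i, w i * (p i * log (p i)))) := by
    refine tendsto_finsetSum _ fun i _ => ((Tendsto.log ?_ (hp i).ne').const_mul _).const_mul _
    simpa using (tendsto_inv_atTop_zero.const_mul (q i)).add_const (p i)
  refine h.congr' ?_
  filter_upwards [eventually_gt_atTop 0] with t ht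
  rw [Finset.sum_mul, ← Finset.sum_sub_distrib]
  refine Finset.sum_congr rfl fun i _ => ?_
  have hpos : 0 < q i * t⁻¹ + p i := add_pos (mul_pos (hq i) (inv_pos.mpr ht)) (hp i)
  have : q i + t * p i = (q i * t⁻¹ + p i) * t := by field_simp
  rw [this, log_mul hpos.ne' ht.ne']
  ring

/-- Comparison of the resolvent sums implies comparison of the logarithmic sums, by
integrating over the resolvent parameter. -/
theorem sum_mul_log_le_of_resolvent_le {ι κ : Type*} [Fintype ι] [Fintype κ] {w p q : ι → ℝ}
    {w' p' q' : κ → ℝ} (hp : ∀ i, 0 < p i) (hq : ∀ i, 0 < q i) (hp' : ∀ i, 0 < p' i)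
    (hq' : ∀ i, 0 < q' i) (hsum : ∑ i, w' i * p' i = ∑ i, w i * p i)
    (h : ∀ t, 0 ≤ t → ∑ i, w' i * (p' i ^ 2 / (q' i + t * p' i))
      ≤ ∑ i, w i * (p i ^ 2 / (q i + t * p i))) :
    ∑ i, w' i * (p' i * log (p' i)) - ∑ i, w' i * (p' i * log (q' i))
      ≤ ∑ i, w i * (p i * log (p i)) - ∑ i, w i * (p i * log (q i)) := by
  let F : ℝ → ℝ := fun t => ∑ i, w i * (p i * log (q i + t * p i))
    - ∑ i, w' i * (p' i * log (q' i + t * p' i))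
  have hF : ∀ t, 0 ≤ t → HasDerivAt F _ t := fun t ht =>
    (hasDerivAt_sum_mul_log hp hq ht).sub (hasDerivAt_sum_mul_log hp' hq' ht)
  have hmono : MonotoneOn F (Set.Ici 0) := by
    refine monotoneOn_of_deriv_nonneg (convex_Ici 0)
      (fun t ht => (hF t ht).continuousAt.continuousWithinAt)
      (fun t ht => (hF t (interior_subset ht)).differentiableAt.differentiableWithinAt)
      fun t ht => ?_
    rw [(hF t (interior_subset ht)).deriv]
    exact sub_nonneg.mpr (h t (interior_subset ht))
  have hlim : Tendsto F atTop
      (𝓝 (∑ i, w i * (p i * log (p i)) - ∑ i, w' i * (p' i * log (p' i)))) := by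
    refine ((tendsto_sum_mul_log hp hq).sub (tendsto_sum_mul_log hp' hq')).congr fun t => ?_
    rw [hsum]
    simp only [F]
    ring
  have h0 : F 0 ≤ _ := ge_of_tendsto hlim (by
    filter_upwards [eventually_ge_atTop 0] with t ht
    exact hmono (Set.self_mem_Ici) ht ht)
  simp only [F, zero_mul, add_zero] at h0
  linarith

theorem IsDiagonalizedBy.sum_overlap_mul_log_left {ρ U V : Matrix n n ℂ} {p : n → ℝ}
    (hρ : IsDiagonalizedBy ρ U p) (hV : V * Vᴴ = 1) :
    ∑ x : n × n, ‖(Uᴴ * V) x.1 x.2‖ ^ 2 * (p x.1 * log (p x.1)) = - spectralEntropy ρ := by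
  have hW : (Uᴴ * V) * (Uᴴ * V)ᴴ = 1 := by
    rw [conjTranspose_mul, conjTranspose_conjTranspose, Matrix.mul_assoc, ← Matrix.mul_assoc V,
      hV, Matrix.one_mul, hρ.conjTranspose_mul_self]
  rw [Fintype.sum_prod_type, hρ.spectralEntropy_eq, ← Finset.sum_neg_distrib]
  refine Finset.sum_congr rfl fun i _ => ?_
  dsimp only
  rw [← Finset.sum_mul, sum_norm_sq_row hW, one_mul, negMulLog, neg_mul, neg_neg]

theorem IsDiagonalizedBy.sum_overlap_mul {ρ U V : Matrix n n ℂ} {p : n → ℝ}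
    (hρ : IsDiagonalizedBy ρ U p) (f : n → ℝ) :
    ∑ x : n × n, ‖(Uᴴ * V) x.1 x.2‖ ^ 2 * (p x.1 * f x.2)
      = ∑ j, ((Vᴴ * ρ * V) j j).re * f j := by
  rw [Fintype.sum_prod_type_right]
  refine Finset.sum_congr rfl fun j _ => ?_
  rw [hρ.conj_apply_self, Complex.ofReal_re, Finset.sum_mul]
  refine Finset.sum_congr rfl fun i _ => ?_
  have : (Vᴴ * U) j i = star ((Uᴴ * V) i j) := by
    rw [← conjTranspose_apply, conjTranspose_mul, conjTranspose_conjTranspose]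
  rw [this, norm_star]
  ring

/-- **Monotonicity of the relative entropy** for positive definite operators under the dual of a
`*`-homomorphism `Φ`. -/
theorem relativeEntropy_monotone {ρ σ U V : Matrix n n ℂ} {p q : n → ℝ}
    {ρ' σ' U' V' : Matrix m m ℂ} {p' q' : m → ℝ}
    (hρ : IsDiagonalizedBy ρ U p) (hσ : IsDiagonalizedBy σ V q)
    (hρ' : IsDiagonalizedBy ρ' U' p') (hσ' : IsDiagonalizedBy σ' V' q')
    (hp : ∀ i, 0 < p i) (hq : ∀ i, 0 < q i) (hp' : ∀ i, 0 < p' i) (hq' : ∀ i, 0 < q' i)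
    (Φ : Matrix m m ℂ → Matrix n n ℂ) (hΦ : ∀ X Y, Φ (X * Y) = Φ X * Φ Y)
    (hΦs : ∀ X, Φ Xᴴ = (Φ X)ᴴ) (hΦ1 : Φ 1 = 1)
    (hΦρ : ∀ X, (ρ * Φ X).trace = (ρ' * X).trace)
    (hΦσ : ∀ X, (σ * Φ X).trace = (σ' * X).trace) :
    - spectralEntropy ρ' - ∑ j, ((V'ᴴ * ρ' * V') j j).re * log (q' j)
      ≤ - spectralEntropy ρ - ∑ j, ((Vᴴ * ρ * V) j j).re * log (q j) := by
  rw [← hρ.sum_overlap_mul_log_left hσ.mul_conjTranspose_self,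
    ← hρ'.sum_overlap_mul_log_left hσ'.mul_conjTranspose_self,
    ← hρ.sum_overlap_mul, ← hρ'.sum_overlap_mul]
  refine sum_mul_log_le_of_resolvent_le (w := fun x : n × n => ‖(Uᴴ * V) x.1 x.2‖ ^ 2)
    (w' := fun x : m × m => ‖(U'ᴴ * V') x.1 x.2‖ ^ 2)
    (p := fun x => p x.1) (q := fun x => q x.2) (p' := fun x => p' x.1) (q' := fun x => q' x.2)
    (fun _ => hp _) (fun _ => hq _) (fun _ => hp' _) (fun _ => hq' _) ?_ fun t ht => ?_
  · have e := hρ.sum_overlap_mul (V := V) (fun _ => 1)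
    have e' := hρ'.sum_overlap_mul (V := V') (fun _ => 1)
    simp only [mul_one] at e e'
    rw [e, e', ← Complex.re_sum, ← Complex.re_sum]
    change (V'ᴴ * ρ' * V').trace.re = (Vᴴ * ρ * V).trace.re
    rw [trace_mul_cycle Vᴴ, trace_mul_cycle V'ᴴ, hσ.mul_conjTranspose_self,
      hσ'.mul_conjTranspose_self, Matrix.one_mul, Matrix.one_mul]
    have := hΦρ 1
    rw [hΦ1, Matrix.mul_one, Matrix.mul_one] at this
    rw [this]
  · obtain ⟨X, hX⟩ := hρ'.exists_modularQuadratic_eq hσ' hp' hq' ht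
    have hle := hρ.modularQuadratic_le hσ hp hq ht (Φ X)
    have heq : modularQuadratic ρ σ t (Φ X) = modularQuadratic ρ' σ' t X := by
      rw [modularQuadratic, modularQuadratic, ← hΦs, ← hΦ, ← hΦ, hΦρ, hΦρ, hΦσ]
    rw [heq, hX] at hle
    rw [Fintype.sum_prod_type, Fintype.sum_prod_type]
    exact hle

end Monotonicity

section PartialTrace

open Real Filter Topology
open scoped Kronecker

variable {a b c n : Type*} [Fintype a] [DecidableEq a] [Fintype b] [DecidableEq b]
  [Fintype c] [DecidableEq c] [Fintype n] [DecidableEq n]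

/-- Partial trace over the first factor. -/
def traceLeft (A : Matrix (a × n) (a × n) ℂ) : Matrix n n ℂ :=
  of fun i j => ∑ k : a, A (k, i) (k, j)

theorem traceLeft_eq_sum_submatrix (A : Matrix (a × n) (a × n) ℂ) :
    traceLeft A = ∑ k : a, A.submatrix (Prod.mk k) (Prod.mk k) := by
  ext i j
  simp [traceLeft, Matrix.sum_apply]

theorem trace_traceLeft (A : Matrix (a × n) (a × n) ℂ) : (traceLeft A).trace = A.trace := by
  simp only [trace, traceLeft, diag_apply, of_apply, Fintype.sum_prod_type]
  exact Finset.sum_comm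

theorem Matrix.PosSemidef.traceLeft {A : Matrix (a × n) (a × n) ℂ} (hA : A.PosSemidef) :
    (traceLeft A).PosSemidef := by
  rw [traceLeft_eq_sum_submatrix]
  exact posSemidef_sum _ fun k _ => hA.submatrix _

theorem submatrix_one_kronecker_conj (A : Matrix (a × n) (a × n) ℂ) (V : Matrix n n ℂ) (k : a) :
    (((1 : Matrix a a ℂ) ⊗ₖ V)ᴴ * A * ((1 : Matrix a a ℂ) ⊗ₖ V)).submatrix (Prod.mk k) (Prod.mk k)
      = Vᴴ * A.submatrix (Prod.mk k) (Prod.mk k) * V := by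
  ext i j
  simp [mul_apply, Fintype.sum_prod_type, one_apply, apply_ite, ite_mul]

theorem sum_one_kronecker_conj_diag {A : Matrix (a × n) (a × n) ℂ} {V : Matrix n n ℂ} {d : n → ℝ}
    (h : IsDiagonalizedBy (traceLeft A) V d) (j : n) :
    ∑ k, ((((1 : Matrix a a ℂ) ⊗ₖ V)ᴴ * A * ((1 : Matrix a a ℂ) ⊗ₖ V)) (k, j) (k, j)).re = d j := by
  have h1 : ∀ k, (((1 : Matrix a a ℂ) ⊗ₖ V)ᴴ * A * ((1 : Matrix a a ℂ) ⊗ₖ V)) (k, j) (k, j)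
      = (Vᴴ * A.submatrix (Prod.mk k) (Prod.mk k) * V) j j := fun k =>
    congrFun (congrFun (submatrix_one_kronecker_conj A V k) j) j
  have h2 : Vᴴ * traceLeft A * V = diagonal (fun i => (d i : ℂ)) := by
    rw [h.eq_conj]
    simp only [Matrix.mul_assoc, h.conjTranspose_mul_self, Matrix.mul_one]
    rw [← Matrix.mul_assoc, h.conjTranspose_mul_self, Matrix.one_mul]
  simp_rw [h1]
  rw [← Complex.re_sum, ← Matrix.sum_apply, ← Matrix.sum_mul, ← Matrix.mul_sum,
    ← traceLeft_eq_sum_submatrix, h2, diagonal_apply_eq, Complex.ofReal_re]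

theorem conjTranspose_one_kronecker_mul_self {V : Matrix n n ℂ} (hV : Vᴴ * V = 1) :
    ((1 : Matrix a a ℂ) ⊗ₖ V)ᴴ * ((1 : Matrix a a ℂ) ⊗ₖ V) = 1 := by
  rw [conjTranspose_kronecker, ← mul_kronecker_mul, hV, conjTranspose_one, Matrix.one_mul,
    one_kronecker_one]

theorem IsDiagonalizedBy.one_kronecker {A U : Matrix n n ℂ} {d : n → ℝ}
    (h : IsDiagonalizedBy A U d) :
    IsDiagonalizedBy ((1 : Matrix a a ℂ) ⊗ₖ A) ((1 : Matrix a a ℂ) ⊗ₖ U) (fun x => d x.2) where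
  conjTranspose_mul_self := conjTranspose_one_kronecker_mul_self h.conjTranspose_mul_self
  eq_conj := by
    have : diagonal (fun x : a × n => (d x.2 : ℂ))
        = (1 : Matrix a a ℂ) ⊗ₖ diagonal (fun i => (d i : ℂ)) := by
      rw [← diagonal_one, diagonal_kronecker_diagonal]
      simp
    rw [this, conjTranspose_kronecker, ← mul_kronecker_mul, ← mul_kronecker_mul, ← h.eq_conj]
    simp

theorem spectralEntropy_le_traceLeft_add {A : Matrix (a × n) (a × n) ℂ} (hA : A.PosSemidef) :
    spectralEntropy A
      ≤ spectralEntropy (traceLeft A) + A.trace.re * Real.log (Fintype.card a) := by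
  obtain ⟨V, d, h⟩ := hA.traceLeft.1.exists_isDiagonalizedBy
  have hnn : ∀ x, 0 ≤ ((((1 : Matrix a a ℂ) ⊗ₖ V)ᴴ * A * ((1 : Matrix a a ℂ) ⊗ₖ V)) x x).re :=
    fun x => (Complex.le_def.mp ((hA.conjTranspose_mul_mul_same _).diag_nonneg (i := x))).1
  refine (spectralEntropy_le_sum_diag hA
    (conjTranspose_one_kronecker_mul_self h.conjTranspose_mul_self)).trans ?_
  rw [h.spectralEntropy_eq, ← trace_traceLeft, h.trace_eq, Complex.re_sum, Finset.sum_mul,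
    ← Finset.sum_add_distrib, Fintype.sum_prod_type_right]
  refine Finset.sum_le_sum fun j _ => ?_
  have := sum_negMulLog_le (fun k => hnn (k, j))
  rwa [sum_one_kronecker_conj_diag h j] at this

theorem spectralEntropy_traceLeft_le {A : Matrix (a × n) (a × n) ℂ} (hA : A.PosSemidef) :
    spectralEntropy (traceLeft A)
      ≤ spectralEntropy A + A.trace.re * Real.log (Fintype.card a) := by
  obtain ⟨U, d, h⟩ := hA.1.exists_isDiagonalizedBy
  obtain ⟨M, hM, hM2⟩ := h.exists_factor (h.nonneg hA)
  let N : Matrix n (a × (a × n)) ℂ := of fun x y => M (y.1, x) y.2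
  have hN : traceLeft A = N * Nᴴ := by
    ext i j
    simp [N, traceLeft, hM, mul_apply, Fintype.sum_prod_type]
  rw [hN, h.spectralEntropy_eq, h.trace_eq, Complex.re_sum, Finset.sum_mul,
    ← Finset.sum_add_distrib]
  refine (spectralEntropy_mul_conjTranspose_le N).trans ?_
  rw [Fintype.sum_prod_type_right]
  refine Finset.sum_le_sum fun y _ => ?_
  refine (sum_negMulLog_le fun k => Finset.sum_nonneg fun i _ => by positivity).trans_eq ?_
  have : ∑ k : a, ∑ i, ‖N i (k, y)‖ ^ 2 = d y := by
    simp only [N, of_apply, hM2, ← Finset.sum_mul]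
    rw [← Fintype.sum_prod_type' (f := fun k i => ‖U (k, i) y‖ ^ 2),
      sum_norm_sq_col h.conjTranspose_mul_self, one_mul]
  rw [this, Complex.ofReal_re]

theorem mBC_eq_traceLeft (ω : Matrix (a × b × c) (a × b × c) ℂ) : mBC ω = traceLeft ω := rfl

theorem mB_eq_traceLeft (ω : Matrix (a × b × c) (a × b × c) ℂ) : mB ω = traceLeft (mAB ω) := rfl

theorem mAB_eq_sum_submatrix (ω : Matrix (a × b × c) (a × b × c) ℂ) :
    mAB ω = ∑ k : c, ω.submatrix (fun p => (p.1, p.2, k)) (fun p => (p.1, p.2, k)) := by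
  ext i j
  simp [mAB, Matrix.sum_apply]

theorem trace_mAB (ω : Matrix (a × b × c) (a × b × c) ℂ) : (mAB ω).trace = ω.trace := by
  simp [trace, mAB, Fintype.sum_prod_type]

theorem Matrix.PosSemidef.mAB {ω : Matrix (a × b × c) (a × b × c) ℂ} (hω : ω.PosSemidef) :
    (mAB ω).PosSemidef := by
  rw [mAB_eq_sum_submatrix]
  exact posSemidef_sum _ fun k _ => hω.submatrix _

theorem mAB_one_kronecker_mBC (ω : Matrix (a × b × c) (a × b × c) ℂ) :
    mAB ((1 : Matrix a a ℂ) ⊗ₖ mBC ω) = (1 : Matrix a a ℂ) ⊗ₖ mB ω := by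
  ext i j
  simp only [mAB, mB, mBC, of_apply, kroneckerMap_apply]
  rw [Finset.sum_comm]
  exact (Finset.mul_sum Finset.univ _ ((1 : Matrix a a ℂ) i.1 j.1)).symm

/-- The embedding `X ↦ X ⊗ 1_C`, dual to the partial trace over `C`. -/
def tensorOneRight (X : Matrix (a × b) (a × b) ℂ) : Matrix (a × b × c) (a × b × c) ℂ :=
  (X ⊗ₖ (1 : Matrix c c ℂ)).submatrix (Equiv.prodAssoc a b c).symm (Equiv.prodAssoc a b c).symm

theorem tensorOneRight_mul (X Y : Matrix (a × b) (a × b) ℂ) :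
    tensorOneRight (c := c) (X * Y) = tensorOneRight X * tensorOneRight Y := by
  rw [tensorOneRight, tensorOneRight, tensorOneRight, submatrix_mul_equiv, ← mul_kronecker_mul,
    Matrix.one_mul]

theorem tensorOneRight_conjTranspose (X : Matrix (a × b) (a × b) ℂ) :
    tensorOneRight (c := c) Xᴴ = (tensorOneRight X)ᴴ := by
  rw [tensorOneRight, tensorOneRight, conjTranspose_submatrix, conjTranspose_kronecker,
    conjTranspose_one]

theorem tensorOneRight_one : tensorOneRight (a := a) (b := b) (c := c) 1 = 1 := by
  rw [tensorOneRight, one_kronecker_one, submatrix_one_equiv]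

theorem trace_mul_tensorOneRight (ω : Matrix (a × b × c) (a × b × c) ℂ)
    (X : Matrix (a × b) (a × b) ℂ) :
    (ω * tensorOneRight X).trace = (mAB ω * X).trace := by
  simp only [trace, diag_apply, mul_apply, tensorOneRight, mAB, of_apply, submatrix_apply,
    kroneckerMap_apply, Fintype.sum_prod_type, Equiv.prodAssoc_symm_apply, one_apply, mul_ite,
    mul_one, mul_zero, Finset.sum_ite_eq', Finset.mem_univ, if_true, Finset.sum_mul]
  refine Finset.sum_congr rfl fun i _ => Finset.sum_congr rfl fun j _ => ?_
  rw [Finset.sum_comm]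
  refine Finset.sum_congr rfl fun k _ => ?_
  rw [Finset.sum_comm]

/-- Strong subadditivity for operators with positive definite marginals. -/
theorem spectralEntropy_strongSubadditivity_of_pos {ω : Matrix (a × b × c) (a × b × c) ℂ}
    {U : Matrix (a × b × c) (a × b × c) ℂ} {p : a × b × c → ℝ} {U' : Matrix (a × b) (a × b) ℂ}
    {p' : a × b → ℝ} {V : Matrix (b × c) (b × c) ℂ} {q : b × c → ℝ} {V' : Matrix b b ℂ}
    {q' : b → ℝ} (hω : IsDiagonalizedBy ω U p) (hAB : IsDiagonalizedBy (mAB ω) U' p')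
    (hBC : IsDiagonalizedBy (mBC ω) V q) (hB : IsDiagonalizedBy (mB ω) V' q')
    (hp : ∀ i, 0 < p i) (hp' : ∀ i, 0 < p' i) (hq : ∀ i, 0 < q i) (hq' : ∀ i, 0 < q' i) :
    spectralEntropy ω + spectralEntropy (mB ω)
      ≤ spectralEntropy (mAB ω) + spectralEntropy (mBC ω) := by
  have h := relativeEntropy_monotone hω (hBC.one_kronecker (a := a)) hAB
    (hB.one_kronecker (a := a)) hp (fun x => hq x.2) hp' (fun x => hq' x.2) tensorOneRight
    tensorOneRight_mul tensorOneRight_conjTranspose tensorOneRight_one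
    (trace_mul_tensorOneRight ω)
    (fun X => by rw [trace_mul_tensorOneRight, mAB_one_kronecker_mBC])
  rw [mBC_eq_traceLeft] at hBC
  rw [mB_eq_traceLeft] at hB
  rw [Fintype.sum_prod_type_right, Fintype.sum_prod_type_right] at h
  simp only [← Finset.sum_mul, sum_one_kronecker_conj_diag hBC,
    sum_one_kronecker_conj_diag hB] at h
  rw [mBC_eq_traceLeft, mB_eq_traceLeft, hBC.spectralEntropy_eq, hB.spectralEntropy_eq]
  simp only [negMulLog, neg_mul, Finset.sum_neg_distrib]
  linarith

theorem tendsto_spectralEntropy_add_smul_one {A : Matrix n n ℂ} (hA : A.IsHermitian) (r : ℝ) :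
    Tendsto (fun δ : ℝ => spectralEntropy (A + ((δ * r : ℝ) : ℂ) • 1)) (𝓝[>] 0)
      (𝓝 (spectralEntropy A)) := by
  obtain ⟨U, d, h⟩ := hA.exists_isDiagonalizedBy
  simp_rw [fun δ : ℝ => (h.add_smul_one (δ * r)).spectralEntropy_eq, h.spectralEntropy_eq]
  have hc : Continuous fun δ : ℝ => ∑ i, negMulLog (d i + δ * r) := by fun_prop
  simpa using (hc.tendsto 0).mono_left nhdsWithin_le_nhds

theorem mAB_add_smul_one (ω : Matrix (a × b × c) (a × b × c) ℂ) (δ : ℝ) :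
    mAB (ω + ((δ * 1 : ℝ) : ℂ) • 1) = mAB ω + ((δ * Fintype.card c : ℝ) : ℂ) • 1 := by
  ext i j
  simp [mAB, Finset.sum_add_distrib, one_apply, Prod.ext_iff, mul_comm]

theorem mBC_add_smul_one (ω : Matrix (a × b × c) (a × b × c) ℂ) (δ : ℝ) :
    mBC (ω + ((δ * 1 : ℝ) : ℂ) • 1) = mBC ω + ((δ * Fintype.card a : ℝ) : ℂ) • 1 := by
  ext i j
  simp [mBC, Finset.sum_add_distrib, one_apply, mul_comm]

theorem mB_add_smul_one (ω : Matrix (a × b × c) (a × b × c) ℂ) (δ : ℝ) :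
    mB (ω + ((δ * 1 : ℝ) : ℂ) • 1)
      = mB ω + ((δ * (Fintype.card a * Fintype.card c) : ℝ) : ℂ) • 1 := by
  ext i j
  simp [mB, Finset.sum_add_distrib, one_apply, mul_comm, mul_left_comm]

/-- **Strong subadditivity** of the von Neumann entropy. -/
theorem spectralEntropy_strongSubadditivity [Nonempty a] [Nonempty c]
    {ω : Matrix (a × b × c) (a × b × c) ℂ} (hω : ω.PosSemidef) :
    spectralEntropy ω + spectralEntropy (mB ω)
      ≤ spectralEntropy (mAB ω) + spectralEntropy (mBC ω) := by
  have hAB := hω.mAB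
  have hBC : (mBC ω).PosSemidef := hω.traceLeft
  have hB : (mB ω).PosSemidef := hAB.traceLeft
  have ha : (0 : ℝ) < Fintype.card a := by exact_mod_cast Fintype.card_pos
  have hc : (0 : ℝ) < Fintype.card c := by exact_mod_cast Fintype.card_pos
  refine le_of_tendsto_of_tendsto
    ((tendsto_spectralEntropy_add_smul_one hω.1 1).add
      (tendsto_spectralEntropy_add_smul_one hB.1 (Fintype.card a * Fintype.card c)))
    ((tendsto_spectralEntropy_add_smul_one hAB.1 (Fintype.card c)).add
      (tendsto_spectralEntropy_add_smul_one hBC.1 (Fintype.card a))) ?_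
  filter_upwards [self_mem_nhdsWithin] with δ hδ
  have hδ : 0 < δ := hδ
  obtain ⟨U, p, hU⟩ := hω.1.exists_isDiagonalizedBy
  obtain ⟨U', p', hU'⟩ := hAB.1.exists_isDiagonalizedBy
  obtain ⟨V, q, hV⟩ := hBC.1.exists_isDiagonalizedBy
  obtain ⟨V', q', hV'⟩ := hB.1.exists_isDiagonalizedBy
  have h := spectralEntropy_strongSubadditivity_of_pos (hU.add_smul_one (δ * 1))
    (mAB_add_smul_one ω δ ▸ hU'.add_smul_one (δ * Fintype.card c))
    (mBC_add_smul_one ω δ ▸ hV.add_smul_one (δ * Fintype.card a))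
    (mB_add_smul_one ω δ ▸ hV'.add_smul_one (δ * (Fintype.card a * Fintype.card c)))
    (fun i => add_pos_of_nonneg_of_pos (hU.nonneg hω i) (by positivity))
    (fun i => add_pos_of_nonneg_of_pos (hU'.nonneg hAB i) (by positivity))
    (fun i => add_pos_of_nonneg_of_pos (hV.nonneg hBC i) (by positivity))
    (fun i => add_pos_of_nonneg_of_pos (hV'.nonneg hB i) (by positivity))
  rwa [mAB_add_smul_one, mBC_add_smul_one, mB_add_smul_one] at h

end PartialTrace

section ConditionalMutualInformation

open Real

variable {a b c n : Type*} [Fintype a] [DecidableEq a] [Fintype b] [DecidableEq b]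
  [Fintype c] [DecidableEq c] [Fintype n] [DecidableEq n]

namespace IsState

theorem mAB {ω : Matrix (a × b × c) (a × b × c) ℂ} (h : IsState ω) : IsState (mAB ω) :=
  ⟨h.1.mAB, (trace_mAB ω).trans h.2⟩

theorem mBC {ω : Matrix (a × b × c) (a × b × c) ℂ} (h : IsState ω) : IsState (mBC ω) :=
  ⟨h.1.traceLeft, (trace_traceLeft ω).trans h.2⟩

theorem mB {ω : Matrix (a × b × c) (a × b × c) ℂ} (h : IsState ω) : IsState (mB ω) :=
  ⟨h.mAB.1.traceLeft, (trace_traceLeft _).trans h.mAB.2⟩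

theorem vnEnt_eq_spectralEntropy {ρ : Matrix n n ℂ} (h : IsState ρ) :
    vnEnt ρ = spectralEntropy ρ := by
  simp [vnEnt_eq h.1.1, h.2]

theorem convexComb {ρ σ : Matrix n n ℂ} (hρ : IsState ρ) (hσ : IsState σ) {p q : ℝ}
    (hp : 0 ≤ p) (hq : 0 ≤ q) (hpq : p + q = 1) : IsState ((p : ℂ) • ρ + (q : ℂ) • σ) := by
  refine ⟨(hρ.1.smul (by exact_mod_cast hp)).add (hσ.1.smul (by exact_mod_cast hq)), ?_⟩
  rw [trace_add, trace_smul, trace_smul, hρ.2, hσ.2]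
  simp only [smul_eq_mul, mul_one]
  exact_mod_cast hpq

theorem vnEnt_concave {ρ σ : Matrix n n ℂ} (hρ : IsState ρ) (hσ : IsState σ) {p q : ℝ}
    (hp : 0 ≤ p) (hq : 0 ≤ q) (hpq : p + q = 1) :
    p * vnEnt ρ + q * vnEnt σ ≤ vnEnt ((p : ℂ) • ρ + (q : ℂ) • σ) := by
  rw [hρ.vnEnt_eq_spectralEntropy, hσ.vnEnt_eq_spectralEntropy,
    (hρ.convexComb hσ hp hq hpq).vnEnt_eq_spectralEntropy]
  exact spectralEntropy_concave hρ.1 hσ.1 hp hq hpq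

theorem vnEnt_convexComb_le {ρ σ : Matrix n n ℂ} (hρ : IsState ρ) (hσ : IsState σ) {p q : ℝ}
    (hp : 0 ≤ p) (hq : 0 ≤ q) (hpq : p + q = 1) :
    vnEnt ((p : ℂ) • ρ + (q : ℂ) • σ) ≤ p * vnEnt ρ + q * vnEnt σ + binEntropy q := by
  rw [hρ.vnEnt_eq_spectralEntropy, hσ.vnEnt_eq_spectralEntropy,
    (hρ.convexComb hσ hp hq hpq).vnEnt_eq_spectralEntropy]
  exact spectralEntropy_convexComb_le hρ.1 hσ.1 hp hq hpq hρ.2 hσ.2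

variable {ω ω' : Matrix (a × b × c) (a × b × c) ℂ}

theorem cmi_nonneg (h : IsState ω) : 0 ≤ cmi ω := by
  have : Nonempty (a × b × c) := by
    by_contra hne
    rw [not_nonempty_iff] at hne
    simpa [trace] using h.2
  obtain ⟨i, _, k⟩ := this
  have : Nonempty a := ⟨i⟩
  have : Nonempty c := ⟨k⟩
  rw [cmi, h.vnEnt_eq_spectralEntropy, h.mAB.vnEnt_eq_spectralEntropy,
    h.mBC.vnEnt_eq_spectralEntropy, h.mB.vnEnt_eq_spectralEntropy]
  linarith [spectralEntropy_strongSubadditivity h.1]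

theorem cmi_le (h : IsState ω) : cmi ω ≤ 2 * Real.log (Fintype.card a) := by
  rw [cmi, h.vnEnt_eq_spectralEntropy, h.mAB.vnEnt_eq_spectralEntropy,
    h.mBC.vnEnt_eq_spectralEntropy, h.mB.vnEnt_eq_spectralEntropy]
  have h1 := spectralEntropy_le_traceLeft_add h.mAB.1
  have h2 := spectralEntropy_traceLeft_le h.1
  rw [h.2, Complex.one_re, one_mul] at h2
  rw [h.mAB.2, Complex.one_re, one_mul] at h1
  rw [mB_eq_traceLeft, mBC_eq_traceLeft]
  linarith

/-- The conditional mutual information is affine up to twice the binary entropy. -/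
theorem abs_cmi_convexComb_sub_le (h : IsState ω) (h' : IsState ω') {p q : ℝ}
    (hp : 0 ≤ p) (hq : 0 ≤ q) (hpq : p + q = 1) :
    |cmi ((p : ℂ) • ω + (q : ℂ) • ω') - (p * cmi ω + q * cmi ω')| ≤ 2 * binEntropy q := by
  have eAB : _root_.mAB ((p : ℂ) • ω + (q : ℂ) • ω')
      = (p : ℂ) • _root_.mAB ω + (q : ℂ) • _root_.mAB ω' := by
    ext i j; simp [_root_.mAB, Finset.sum_add_distrib, Finset.mul_sum]
  have eBC : _root_.mBC ((p : ℂ) • ω + (q : ℂ) • ω')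
      = (p : ℂ) • _root_.mBC ω + (q : ℂ) • _root_.mBC ω' := by
    ext i j; simp [_root_.mBC, Finset.sum_add_distrib, Finset.mul_sum]
  have eB : _root_.mB ((p : ℂ) • ω + (q : ℂ) • ω')
      = (p : ℂ) • _root_.mB ω + (q : ℂ) • _root_.mB ω' := by
    ext i j; simp [_root_.mB, Finset.sum_add_distrib, Finset.mul_sum]
  rw [cmi, cmi, cmi, eAB, eBC, eB, abs_le]
  constructor <;>
  linarith [h.vnEnt_concave h' hp hq hpq, h.vnEnt_convexComb_le h' hp hq hpq,
    h.mAB.vnEnt_concave h'.mAB hp hq hpq, h.mAB.vnEnt_convexComb_le h'.mAB hp hq hpq,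
    h.mBC.vnEnt_concave h'.mBC hp hq hpq, h.mBC.vnEnt_convexComb_le h'.mBC hp hq hpq,
    h.mB.vnEnt_concave h'.mB hp hq hpq, h.mB.vnEnt_convexComb_le h'.mB hp hq hpq]

end IsState

theorem IsDiagonalizedBy.traceNorm_eq {A U : Matrix n n ℂ} {d : n → ℝ}
    (h : IsDiagonalizedBy A U d) : traceNorm A = ∑ i, |d i| := by
  have h2 : IsDiagonalizedBy (Aᴴ * A) U (fun i => d i ^ 2) := by
    refine ⟨h.conjTranspose_mul_self, ?_⟩
    rw [h.isHermitian.eq]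
    conv_lhs => rw [h.eq_conj]
    simp only [Matrix.mul_assoc]
    rw [← Matrix.mul_assoc Uᴴ, h.conjTranspose_mul_self, Matrix.one_mul,
      ← Matrix.mul_assoc (diagonal _), diagonal_mul_diagonal]
    simp [sq]
  rw [traceNorm, IsHermitian.sum_eigenvalues_eq_sum_roots, h2.sum_roots]
  simp [Real.sqrt_sq_eq_abs]

/-- Jordan decomposition of the difference of two distinct states. -/
theorem IsState.exists_jordan {ρ σ : Matrix n n ℂ} (hρ : IsState ρ) (hσ : IsState σ)
    (hε : 0 < traceNorm (ρ - σ) / 2) :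
    ∃ τ τ', IsState τ ∧ IsState τ' ∧
      ρ + ((traceNorm (ρ - σ) / 2 : ℝ) : ℂ) • τ' = σ + ((traceNorm (ρ - σ) / 2 : ℝ) : ℂ) • τ := by
  obtain ⟨U, d, h⟩ := (hρ.1.1.sub hσ.1.1).exists_isDiagonalizedBy
  have hsum : ∑ i, d i = 0 := by
    have h1 := h.trace_eq
    rw [trace_sub, hρ.2, hσ.2, sub_self] at h1
    exact_mod_cast h1.symm
  have hnorm := h.traceNorm_eq
  set ε := traceNorm (ρ - σ) / 2
  have key : ∀ e : n → ℝ, (∀ i, 0 ≤ e i) → ∑ i, e i = ε →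
      IsState (((ε⁻¹ : ℝ) : ℂ) • (U * diagonal (fun i => (e i : ℂ)) * Uᴴ)) := by
    intro e he hes
    have hd : IsDiagonalizedBy (U * diagonal (fun i => (e i : ℂ)) * Uᴴ) U e :=
      ⟨h.conjTranspose_mul_self, rfl⟩
    refine ⟨(hd.posSemidef he).smul (by exact_mod_cast (inv_pos.mpr hε).le), ?_⟩
    rw [trace_smul, hd.trace_eq, smul_eq_mul]
    have : ε⁻¹ * ∑ i, e i = 1 := by rw [hes, inv_mul_cancel₀ hε.ne']
    exact_mod_cast this
  have hpos : ∑ i, (|d i| + d i) / 2 = ε := by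
    rw [← Finset.sum_div, Finset.sum_add_distrib, hsum, ← hnorm, add_zero]
  have hneg : ∑ i, (|d i| - d i) / 2 = ε := by
    rw [← Finset.sum_div, Finset.sum_sub_distrib, hsum, ← hnorm, sub_zero]
  refine ⟨_, _, key (fun i => (|d i| + d i) / 2) (fun i => by linarith [neg_abs_le (d i)]) hpos,
    key (fun i => (|d i| - d i) / 2) (fun i => by linarith [le_abs_self (d i)]) hneg, ?_⟩
  rw [smul_smul, smul_smul, ← Complex.ofReal_mul, mul_inv_cancel₀ hε.ne', Complex.ofReal_one,
    one_smul, one_smul, add_comm σ, ← sub_eq_sub_iff_add_eq_add, ← Matrix.sub_mul,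
    ← Matrix.mul_sub, diagonal_sub]
  conv_lhs => rw [h.eq_conj]
  congr! 4 with i
  push_cast
  ring

theorem IsState.cmi_sub_le {ω₁ ω₂ τ τ' : Matrix (a × b × c) (a × b × c) ℂ} (h1 : IsState ω₁)
    (h2 : IsState ω₂) (hτ : IsState τ) (hτ' : IsState τ') {ε : ℝ} (hε : 0 ≤ ε)
    (h : ω₁ + (ε : ℂ) • τ' = ω₂ + (ε : ℂ) • τ) :
    cmi ω₁ - cmi ω₂ ≤ 2 * ε * Real.log (Fintype.card a)
      + 4 * (1 + ε) * binEntropy (ε / (1 + ε)) := by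
  have hpos : 0 < 1 + ε := by linarith
  have hp : 0 ≤ (1 + ε)⁻¹ := by positivity
  have hq : 0 ≤ ε / (1 + ε) := by positivity
  have hpq : (1 + ε)⁻¹ + ε / (1 + ε) = 1 := by field_simp
  have hmix : ∀ ω σ : Matrix (a × b × c) (a × b × c) ℂ,
      (((1 + ε)⁻¹ : ℝ) : ℂ) • ω + ((ε / (1 + ε) : ℝ) : ℂ) • σ
        = (((1 + ε)⁻¹ : ℝ) : ℂ) • (ω + (ε : ℂ) • σ) := fun ω σ => by
    rw [smul_add, smul_smul, ← Complex.ofReal_mul, div_eq_inv_mul]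
  have e1 := (abs_le.mp (h1.abs_cmi_convexComb_sub_le hτ' hp hq hpq)).1
  have e2 := (abs_le.mp (h2.abs_cmi_convexComb_sub_le hτ hp hq hpq)).2
  rw [hmix] at e1 e2
  rw [h] at e1
  have e3 : (1 + ε)⁻¹ * (cmi ω₁ - cmi ω₂)
      ≤ ε / (1 + ε) * (cmi τ - cmi τ') + 4 * binEntropy (ε / (1 + ε)) := by linarith
  rw [inv_mul_le_iff₀ hpos] at e3
  have e4 : ε * (cmi τ - cmi τ') ≤ ε * (2 * Real.log (Fintype.card a)) :=
    mul_le_mul_of_nonneg_left (by linarith [hτ.cmi_le, hτ'.cmi_nonneg]) hε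
  refine e3.trans ?_
  rw [mul_add, ← mul_assoc, mul_div_cancel₀ _ hpos.ne']
  linarith

end ConditionalMutualInformation

/-- Continuity bound for the conditional mutual information:
`|I(A:C|B)_{ω¹} − I(A:C|B)_{ω²}| ≤ 2ε log dim H_A + 4(1+ε)h₂(ε/(1+ε))` when
`ε = ½‖ω¹−ω²‖₁ < 1`. -/
theorem cmi_continuity_bound {a b c : Type*} [Fintype a] [DecidableEq a] [Fintype b]
    [DecidableEq b] [Fintype c] [DecidableEq c]
    (ω₁ ω₂ : Matrix (a × b × c) (a × b × c) ℂ) (h1 : IsState ω₁) (h2 : IsState ω₂)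
    (hε : traceNorm (ω₁ - ω₂) / 2 < 1) :
    |cmi ω₁ - cmi ω₂|
      ≤ 2 * (traceNorm (ω₁ - ω₂) / 2) * Real.log (Fintype.card a)
        + 4 * (1 + traceNorm (ω₁ - ω₂) / 2) *
            Real.binEntropy ((traceNorm (ω₁ - ω₂) / 2) / (1 + traceNorm (ω₁ - ω₂) / 2)) := by
  have hnn : 0 ≤ traceNorm (ω₁ - ω₂) / 2 :=
    div_nonneg (Finset.sum_nonneg fun _ _ => Real.sqrt_nonneg _) zero_le_two
  rcases hnn.eq_or_lt with h0 | hpos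
  · have h := (h1.1.1.sub h2.1.1).isDiagonalizedBy
    have hz : ∑ i, |(h1.1.1.sub h2.1.1).eigenvalues i| = 0 := by
      rw [← h.traceNorm_eq]; linarith
    rw [Finset.sum_eq_zero_iff_of_nonneg fun _ _ => abs_nonneg _] at hz
    have hd : (h1.1.1.sub h2.1.1).eigenvalues = 0 :=
      funext fun i => abs_eq_zero.mp (hz i (Finset.mem_univ i))
    have : ω₁ = ω₂ := sub_eq_zero.mp ((h1.1.1.sub h2.1.1).eigenvalues_eq_zero_iff.mp hd)
    rw [← h0, this]
    simp
  · obtain ⟨τ, τ', hτ, hτ', h⟩ := h1.exists_jordan h2 hpos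
    exact abs_sub_le_iff.mpr
      ⟨h1.cmi_sub_le h2 hτ hτ' hnn h, h2.cmi_sub_le h1 hτ' hτ hnn h.symm⟩
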